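/- Let n ≥ k ≥ 1 with n - k even. The number of non-crossing half-pairings on [n] with exactly k through strings is the binomial coefficient C(n, (n-k)/2). -/

import Mathlib

/-!
Place the points on a circle. Since there is a through string and the merged partition is
non-crossing, all through strings lie on one side of each pair, so exactly one point `x` of each
pair is an *opener*: the clockwise arc from `x` to its partner contains no through string. A
half-pairing of `n` points with `m` openers has `n - 2 * m` through strings, and sending a
half-pairing to its set of openers is a bijection onto the sets of fewer than `n / 2` points.

For bijectivity, let `S` be such a set and `T` the set of all points. Going around the circle, some
point `i` of `S` is immediately followed by a point `j` of `T \ S`. These two must be paired in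
every half-pairing of `T` with opener set `S`, and removing or adding the pair `{i, j}` translates
between such half-pairings and those of `T \ {i, j}` with opener set `S \ {i}`, so that induction
on the size of `S` applies.
-/

namespace NCC

/-- A letter `u_i^{±1}`: a generator index together with a sign. -/
abbrev Letter (N : ℕ) := Fin N × Bool

/-- The inverse of a letter. -/
def linv {N : ℕ} (l : Letter N) : Letter N := (l.1, !l.2)

/-- One cyclic reduction step: either a linear reduction step (removal of two
adjacent letters which are inverses of each other), or removal of the first and
last letters when they are inverses of each other. -/
def CyclicStep {N : ℕ} (w w' : List (Letter N)) : Prop :=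
  FreeGroup.Red.Step w w' ∨
    ∃ (l : Letter N) (m : List (Letter N)), w = l :: (m ++ [linv l]) ∧ w' = m

/-- `w` reduces cyclically (in zero or more steps) to `v`. -/
def CycReducesTo {N : ℕ} (w v : List (Letter N)) : Prop :=
  Relation.ReflTransGen CyclicStep w v

/-- A word is linearly reduced when no two adjacent letters are inverses of
each other. -/
def LinReduced {N : ℕ} (w : List (Letter N)) : Prop :=
  List.Chain' (fun a b => b ≠ linv a) w

/-- A word is cyclically reduced iff `w ++ w` is linearly reduced, i.e. it is
linearly reduced and its last letter is not the inverse of its first letter. -/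
def CycReduced {N : ℕ} (w : List (Letter N)) : Prop :=
  LinReduced (w ++ w)

/-- A word is reducible to 1 if it linearly reduces to the empty word. -/
def ReducibleToOne {N : ℕ} (w : List (Letter N)) : Prop :=
  FreeGroup.Red w []

/-- A word has good reduction: no nonempty prefix is reducible to 1, and its
linear reduction is cyclically reduced. -/
def GoodReduction {N : ℕ} (w : List (Letter N)) : Prop :=
  (∀ s, s <+: w → s ≠ [] → ¬ ReducibleToOne s) ∧
    CycReduced (FreeGroup.reduce w)

/-- The first `i` letters of the infinite word `w_∞ = w w w ⋯`. -/
def infTake {N : ℕ} (w : List (Letter N)) (i : ℕ) : List (Letter N) :=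
  ((List.replicate i w).flatten).take i

open scoped Classical

/-- `i` and `j` lie in a common block of the partition `P`. -/
def Rel {n : ℕ} (P : Finpartition (Finset.univ : Finset (Fin n))) (i j : Fin n) : Prop :=
  ∃ B ∈ P.parts, i ∈ B ∧ j ∈ B

/-- `i` lies in a singleton block of `P`. -/
def IsSingleton {n : ℕ} (P : Finpartition (Finset.univ : Finset (Fin n))) (i : Fin n) : Prop :=
  ∃ B ∈ P.parts, i ∈ B ∧ B.card = 1

/-- The relation of the partition `π̃` obtained from `P` by merging all
singleton blocks into a single block. -/
def RelTilde {n : ℕ} (P : Finpartition (Finset.univ : Finset (Fin n))) (i j : Fin n) : Prop :=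
  Rel P i j ∨ (IsSingleton P i ∧ IsSingleton P j)

/-- An equivalence-like relation on `[n]` is non-crossing when there are no
`i₁ < i₂ < i₃ < i₄` with `i₁ ∼ i₃`, `i₂ ∼ i₄` but `i₁ ≁ i₂`. -/
def NonCrossingRel {n : ℕ} (r : Fin n → Fin n → Prop) : Prop :=
  ∀ i1 i2 i3 i4 : Fin n, i1 < i2 → i2 < i3 → i3 < i4 → r i1 i3 → r i2 i4 → r i1 i2

/-- A non-crossing half-pairing on `[n]`: a non-crossing partition all of whose
blocks have at most two elements, with at least one singleton block (through
string), such that merging all singleton blocks still gives a non-crossing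
partition. -/
structure HalfPairing (n : ℕ) where
  P : Finpartition (Finset.univ : Finset (Fin n))
  card_le : ∀ B ∈ P.parts, B.card ≤ 2
  exists_singleton : ∃ i, IsSingleton P i
  nc : NonCrossingRel (Rel P)
  nc_tilde : NonCrossingRel (RelTilde P)

/-- `r` and `s` form a pair (a two-element block) of `π`. -/
def Pairs {n : ℕ} (π : HalfPairing n) (r s : Fin n) : Prop :=
  r ≠ s ∧ Rel π.P r s

/-- Membership in the cyclic interval `[i, j]` (going clockwise from `i` to
`j`, endpoints included). -/
def InCyc {n : ℕ} (i j x : Fin n) : Prop :=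
  (x.val + n - i.val) % n ≤ (j.val + n - i.val) % n

/-- Cyclic successor of `i` in `[n]`. -/
def cnext {n : ℕ} (i : Fin n) : Fin n :=
  ⟨(i.val + 1) % n, Nat.mod_lt _ i.pos⟩

/-- Cyclic predecessor of `i` in `[n]`. -/
def cprev {n : ℕ} (i : Fin n) : Fin n :=
  ⟨(i.val + n - 1) % n, Nat.mod_lt _ i.pos⟩

/-- `a + j` modulo `n`. -/
def cadd {n : ℕ} (a j : Fin n) : Fin n :=
  ⟨(a.val + j.val) % n, Nat.mod_lt _ a.pos⟩

/-- `x - a` modulo `n`. -/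
def csub {n : ℕ} (x a : Fin n) : Fin n :=
  ⟨(x.val + n - a.val) % n, Nat.mod_lt _ a.pos⟩

/-- `i` has the outward orientation: it is a singleton, or it is the point of a
pair `(i, s)` such that the cyclic interval `[i, s]` contains no singleton. -/
def OutOriented {n : ℕ} (π : HalfPairing n) (i : Fin n) : Prop :=
  IsSingleton π.P i ∨
    ∃ s, Pairs π i s ∧ ∀ x, InCyc i s x → ¬ IsSingleton π.P x

/-- `i` covers `j`: both are outward oriented, and either `j` is the cyclic
successor of `i`, or `π` pairs each point of the cyclic interval
`[i+1, j-1]` with another point of `[i+1, j-1]`. -/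
def Covers {n : ℕ} (π : HalfPairing n) (i j : Fin n) : Prop :=
  OutOriented π i ∧ OutOriented π j ∧
    (j = cnext i ∨
      ∀ x, InCyc (cnext i) (cprev j) x →
        ∃ y, y ≠ x ∧ InCyc (cnext i) (cprev j) y ∧ Pairs π x y)

/-- The set of through strings (singleton blocks) of `π`. -/
noncomputable def throughFinset {n : ℕ} (π : HalfPairing n) : Finset (Fin n) :=
  Finset.univ.filter (fun i => IsSingleton π.P i)

/-- The word formed by the letters of `w` at the through strings of `π`,
read in increasing order of position. -/
noncomputable def throughWord {n N : ℕ} (w : Fin n → Letter N) (π : HalfPairing n) :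
    List (Letter N) :=
  ((throughFinset π).sort (· ≤ ·)).map w

/-- `π` is a `w`-pairing: paired positions carry mutually inverse letters, and
the through-string letters, read in order, form a cyclic reduction of `w`. -/
def IsWPairing {n N : ℕ} (w : Fin n → Letter N) (π : HalfPairing n) : Prop :=
  (∀ r s, Pairs π r s → w r = linv (w s)) ∧
    CycReducesTo (List.ofFn w) (throughWord w π) ∧ CycReduced (throughWord w π)

/-- `π` is `w`-admissible: it is a `w`-pairing and `l_i ≠ l_j⁻¹` whenever
`i` covers `j`. -/
def Admissible {n N : ℕ} (w : Fin n → Letter N) (π : HalfPairing n) : Prop :=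
  IsWPairing w π ∧ ∀ i j, Covers π i j → w i ≠ linv (w j)

section CircularOrder

variable {α : Type*} [CircularOrder α] {a b c i j x z : α}

lemma sbtw_or_sbtw_of_ne (hab : a ≠ b) (hbc : b ≠ c) (hca : c ≠ a) : sbtw a b c ∨ sbtw c b a := by
  simp only [sbtw_iff_not_btw]
  by_contra! h
  rcases h.1.antisymm h.2 with h | h | h
  exacts [hbc h.symm, hab h.symm, hca h.symm]

lemma sbtw_congr_of_not_sbtw (hx : ¬ sbtw i x j) (hz : ¬ sbtw i z j) (hxi : x ≠ i) (hxj : x ≠ j)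
    (hzi : z ≠ i) (hzj : z ≠ j) : sbtw x i z ↔ sbtw x j z := by
  have hne {y : α} (h : sbtw x y z) : z ≠ x := by
    rintro rfl
    exact sbtw_irrefl_left_right h
  constructor <;> intro h <;> by_contra hcon
  · have hzjx := (sbtw_or_sbtw_of_ne hxj hzj.symm (hne h)).resolve_left hcon
    exact hz (sbtw_trans_right hzjx h.cyclic_right).cyclic_right
  · have hzix := (sbtw_or_sbtw_of_ne hxi hzi.symm (hne h)).resolve_left hcon
    exact hx (sbtw_trans_right h hzix.cyclic_right).cyclic_right

/-- An arc from `S` to `T \ S` containing the fewest points of `T` contains none. -/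
lemma exists_mem_exists_mem_sdiff_forall_not_sbtw [DecidableEq α] {S T : Finset α}
    (hS : S.Nonempty) (hTS : (T \ S).Nonempty) :
    ∃ i ∈ S, ∃ j ∈ T \ S, ∀ t ∈ T, ¬ sbtw i t j := by
  obtain ⟨⟨i, j⟩, hmem, hmin⟩ := (S ×ˢ (T \ S)).exists_min_image
    (fun p => (T.filter fun t => sbtw p.1 t p.2).card) (hS.product hTS)
  obtain ⟨hi, hj⟩ := Finset.mem_product.1 hmem
  refine ⟨i, hi, j, hj, fun t ht hitj => ?_⟩
  have not_mem_of_subarc {a b : α} (hab : (a, b) ∈ S ×ˢ (T \ S))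
      (hsub : ∀ u, sbtw a u b → sbtw i u j) : sbtw a t b := by
    by_contra htab
    refine (hmin _ hab).not_gt (Finset.card_lt_card ((Finset.ssubset_iff_of_subset ?_).2 ⟨t, ?_⟩))
    · exact Finset.monotone_filter_right T fun u _ => hsub u
    · simp [ht, hitj, htab]
  by_cases htS : t ∈ S
  · exact sbtw_irrefl_left (not_mem_of_subarc (Finset.mk_mem_product htS hj) fun _ =>
      hitj.trans_left)
  · exact sbtw_irrefl_right (not_mem_of_subarc
      (Finset.mk_mem_product hi (Finset.mem_sdiff.2 ⟨ht, htS⟩)) fun _ hu => hu.trans_right hitj)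

end CircularOrder

/-- `f` is the partner involution of a non-crossing half-pairing of the points of `T`, placed on a
circle, whose set of openers is `S`: every pair has exactly one point `x` in `S`, and the arc from
`x` to its partner is a union of pairs. The through strings are the fixed points of `f` in `T`;
points outside `T` are fixed by convention. -/
structure IsHalfMatching {α : Type*} [CircularOrder α] (T S : Finset α) (f : α → α) : Prop where
  involutive : Function.Involutive f
  mem_of_apply_ne {x : α} : f x ≠ x → x ∈ T
  mem_or_apply_mem {x : α} : f x ≠ x → x ∈ S ∨ f x ∈ S
  apply_notMem {x : α} : x ∈ S → f x ∉ S
  apply_ne {x y : α} : x ∈ S → y ∈ T → sbtw x y (f x) → f y ≠ y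
  sbtw_apply {x y : α} : x ∈ S → sbtw x y (f x) → sbtw x (f y) (f x)

namespace IsHalfMatching

variable {α : Type*} [CircularOrder α] {T S : Finset α} {f : α → α} {i j x y v : α}

lemma apply_ne_self (hf : IsHalfMatching T S f) (hx : x ∈ S) : f x ≠ x := fun h =>
  hf.apply_notMem hx (h.symm ▸ hx)

lemma subset (hf : IsHalfMatching T S f) : S ⊆ T := fun _ hx =>
  hf.mem_of_apply_ne (hf.apply_ne_self hx)

lemma apply_mem (hf : IsHalfMatching T S f) (hx : f x ≠ x) : f x ∈ T :=
  hf.mem_of_apply_ne fun h => hx (hf.involutive.injective h)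

lemma card_filter_add_two_mul_card [DecidableEq α] (hf : IsHalfMatching T S f) :
    (T.filter fun x => f x = x).card + 2 * S.card = T.card := by
  have hmoved : (T.filter fun x => f x ≠ x) = S ∪ S.image f := by
    ext x
    have := @hf.mem_or_apply_mem x
    have := @hf.mem_of_apply_ne x
    have := @hf.apply_ne_self
    have inv : ∀ x, f (f x) = x := hf.involutive
    simp only [Finset.mem_filter, Finset.mem_union, Finset.mem_image]
    grind
  have hdisj : Disjoint S (S.image f) := by
    simpa [Finset.disjoint_right] using fun x hx => hf.apply_notMem hx
  rw [← T.card_filter_add_card_filter_not fun x => f x = x, hmoved,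
    Finset.card_union_of_disjoint hdisj, Finset.card_image_of_injective _ hf.involutive.injective,
    two_mul]

lemma exists_apply_eq (hf : IsHalfMatching T S f) (hcard : 2 * S.card < T.card) :
    ∃ a ∈ T, f a = a := by
  have := hf.card_filter_add_two_mul_card
  simpa [Finset.Nonempty] using
    Finset.card_pos.1 (show 0 < (T.filter fun x => f x = x).card by omega)

lemma mem_iff (hf : IsHalfMatching T S f) (hfix : ∃ a ∈ T, f a = a) :
    x ∈ S ↔ f x ≠ x ∧ ∀ a ∈ T, f a = a → ¬ sbtw x a (f x) := by
  refine ⟨fun hx => ⟨hf.apply_ne_self hx, fun a ha hfa h => hf.apply_ne hx ha h hfa⟩, ?_⟩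
  rintro ⟨hx, harc⟩
  refine (hf.mem_or_apply_mem hx).resolve_right fun hfx => ?_
  obtain ⟨a, ha, hfa⟩ := hfix
  have hax : a ≠ x := by grind
  have haf : a ≠ f x := by grind [hf.involutive x]
  refine hf.apply_ne hfx ha ?_ hfa
  rw [hf.involutive x]
  exact (sbtw_or_sbtw_of_ne hax.symm haf hx).resolve_left (harc a ha hfa)

lemma not_crossing (hf : IsHalfMatching T S f) (hy : y ∈ T) (hv : v ∈ T)
    (hxy : sbtw x y (f x)) (hxv : sbtw (f x) v x) :
    ¬ (v = y ∨ v = f y ∨ (f y = y ∧ f v = v)) := by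
  have hx : f x ≠ x := by
    intro h
    rw [h] at hxy
    exact sbtw_irrefl_left_right hxy
  have hvy : v ≠ y := by
    rintro rfl
    exact sbtw_asymm hxy hxv
  rcases hf.mem_or_apply_mem hx with hx | hx
  · have := hf.apply_ne hx hy hxy
    have := sbtw_asymm (hf.sbtw_apply hx hxy)
    grind
  · have hffx := hf.involutive x
    have := hf.apply_ne hx hv (by rwa [hffx])
    have := sbtw_asymm (hf.sbtw_apply hx (by rwa [hffx]))
    grind [hf.involutive y]

/-- Otherwise `j` is paired, inside the arc of `i`, with an opener whose own arc covers the rest of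
the circle, which leaves no room for a through string. -/
lemma apply_eq_of_forall_not_sbtw (hf : IsHalfMatching T S f) (hcard : 2 * S.card < T.card)
    (hi : i ∈ S) (hjT : j ∈ T) (hjS : j ∉ S) (hij : ∀ t ∈ T, ¬ sbtw i t j) : f i = j := by
  by_contra hne
  have hfi := hf.apply_ne_self hi
  have hji : j ≠ i := fun h => hjS (h ▸ hi)
  have hi_j : sbtw i j (f i) :=
    (sbtw_or_sbtw_of_ne hji.symm (Ne.symm hne) hfi).resolve_right fun h =>
      hij _ (hf.apply_mem hfi) h.cyclic_right
  have hfj := hf.apply_ne hi hjT hi_j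
  have hfjS : f j ∈ S := (hf.mem_or_apply_mem hfj).resolve_left hjS
  have hi_fj : sbtw i (f j) (f i) := hf.sbtw_apply hi hi_j
  have hfji : f j ≠ i := by rintro h; rw [h] at hi_fj; exact sbtw_irrefl_left hi_fj
  have hj_fj : sbtw j (f j) i :=
    (sbtw_or_sbtw_of_ne hfji.symm hfj hji).resolve_left (hij _ (hf.subset hfjS))
  obtain ⟨a, haT, ha⟩ := hf.exists_apply_eq hcard
  have hfi_a : sbtw (f i) a i :=
    (sbtw_or_sbtw_of_ne (by grind) (by grind [hf.involutive i]) hfi).resolve_left fun h =>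
      hf.apply_ne hi haT h ha
  have hfj_a : sbtw (f j) a j :=
    (hi_fj.cyclic_left.trans_left hfi_a).trans_right hj_fj.cyclic_left
  exact hf.apply_ne hfjS haT (by rwa [hf.involutive j]) ha

variable [DecidableEq α]

lemma comp_swap_of_apply_eq (hf : IsHalfMatching T S f) (hi : i ∈ S) (hfi : f i = j) :
    IsHalfMatching (T \ {i, j}) (S.erase i) (f ∘ Equiv.swap i j) := by
  have hfj : f j = i := by rw [← hfi, hf.involutive i]
  have hjS : j ∉ S := hfi ▸ hf.apply_notMem hi
  have happly (x : α) : (f ∘ Equiv.swap i j) x = if x = i ∨ x = j then x else f x := by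
    grind
  exact {
    involutive x := by simp only [happly]; grind [hf.involutive x]
    mem_of_apply_ne {x} := by
      simp only [happly]
      grind [hf.involutive x, hf.mem_of_apply_ne (x := x)]
    mem_or_apply_mem {x} := by
      simp only [happly]
      grind [hf.involutive x, hf.mem_or_apply_mem (x := x)]
    apply_notMem {x} := by
      simp only [happly]
      grind [hf.apply_notMem (x := x)]
    apply_ne {x y} := by
      simp only [happly]
      grind [hf.apply_ne (x := x) (y := y)]
    sbtw_apply {x y} := by
      simp only [happly]
      grind [hf.sbtw_apply (x := x) (y := y)] }

lemma comp_swap_of_forall_not_sbtw (hf : IsHalfMatching (T \ {i, j}) (S.erase i) f)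
    (hi : i ∈ S) (hST : S ⊆ T) (hj : j ∈ T \ S) (hij : ∀ t ∈ T, ¬ sbtw i t j) :
    IsHalfMatching T S (f ∘ Equiv.swap i j) := by
  have hfi : f i = i := not_not.1 fun h => by simpa using hf.mem_of_apply_ne h
  have hfj : f j = j := not_not.1 fun h => by simpa using hf.mem_of_apply_ne h
  have hmem {x : α} (hx : f x ≠ x) : x ∈ T := (Finset.mem_sdiff.1 (hf.mem_of_apply_ne hx)).1
  have happly (x : α) : (f ∘ Equiv.swap i j) x = if x = i then j else if x = j then i else f x := by
    grind
  have hadj {x : α} (hx : x ∈ S.erase i) : sbtw x i (f x) ↔ sbtw x j (f x) := by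
    have := hf.subset hx
    have := hf.apply_mem (hf.apply_ne_self hx)
    apply sbtw_congr_of_not_sbtw <;> grind
  exact {
    involutive x := by simp only [happly]; grind [hf.involutive x]
    mem_of_apply_ne {x} := by
      simp only [happly]
      grind [hmem (x := x)]
    mem_or_apply_mem {x} := by
      simp only [happly]
      grind [hf.mem_or_apply_mem (x := x)]
    apply_notMem {x} := by
      simp only [happly]
      grind [hf.involutive x, hf.apply_notMem (x := x)]
    apply_ne {x y} := by
      simp only [happly]
      grind [hf.apply_ne (x := x) (y := y)]
    sbtw_apply {x y} := by
      simp only [happly]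
      grind [hf.sbtw_apply (x := x) (y := y), hmem (x := y)] }

end IsHalfMatching

theorem existsUnique_isHalfMatching {α : Type*} [CircularOrder α] {T S : Finset α} (hST : S ⊆ T)
    (hcard : 2 * S.card < T.card) : ∃! f, IsHalfMatching T S f := by
  induction hm : S.card generalizing S T with
  | zero =>
    obtain rfl := Finset.card_eq_zero.mp hm
    refine ⟨id, ⟨fun _ => rfl, by simp, by simp, by simp, by simp, by simp⟩, fun f hf => ?_⟩
    funext x
    by_contra hx
    simpa using hf.mem_or_apply_mem hx
  | succ m ih =>
    have hTS : 0 < (T \ S).card := by have := Finset.le_card_sdiff S T; omega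
    obtain ⟨i, hi, j, hj, hij⟩ := exists_mem_exists_mem_sdiff_forall_not_sbtw
      (Finset.card_pos.1 (by omega)) (Finset.card_pos.1 hTS)
    obtain ⟨hjT, hjS⟩ := Finset.mem_sdiff.1 hj
    have hsub : {i, j} ⊆ T := by grind
    have hT : (T \ {i, j}).card + 2 = T.card := by
      rw [← Finset.card_pair (show i ≠ j by grind), Finset.card_sdiff_add_card_eq_card hsub]
    have hS := Finset.card_erase_of_mem hi
    obtain ⟨g, hg, hg_unique⟩ := ih (T := T \ {i, j}) (S := S.erase i)
      (by grind) (by omega) (by omega)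
    refine ⟨g ∘ Equiv.swap i j, hg.comp_swap_of_forall_not_sbtw hi hST hj hij, fun f hf => ?_⟩
    have hfi := hf.apply_eq_of_forall_not_sbtw hcard hi hjT hjS hij
    rw [← hg_unique _ (hf.comp_swap_of_apply_eq hi hfi), Function.comp_assoc]
    ext x
    simp

lemma nonCrossingRel_iff_sbtw {n : ℕ} {r : Fin n → Fin n → Prop} (hr : Equivalence r) :
    NonCrossingRel r ↔
      ∀ x y u v, sbtw x y u → sbtw u v x → r x u → r y v → r x y := by
  refine ⟨fun h x y u v hxyu huvx hxu hyv => ?_, fun h x y u v hxy hyu huv => ?_⟩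
  · rw [Fin.sbtw_iff] at hxyu huvx
    have := hr.symm hxu
    have := hr.symm hyv
    have htrans (a b c : Fin n) : r a b → r b c → r a c := hr.trans
    have hsymm (a b : Fin n) : r a b → r b a := hr.symm
    have := h x y u v
    have := h y u v x
    have := h u v x y
    have := h v x y u
    grind
  · exact h x y u v (Or.inl ⟨hxy, hyu⟩) (Or.inr (Or.inr ⟨hxy.trans hyu, huv⟩))

/-- The blocks of `P` are the sets `{x, f x}`: `f` exchanges the two points of a pair and fixes the
singletons. -/
def IsPartner {n : ℕ} (P : Finpartition (Finset.univ : Finset (Fin n))) (f : Fin n → Fin n) :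
    Prop :=
  ∀ x, P.part x = {x, f x}

section Finpartition

variable {n : ℕ} {P : Finpartition (Finset.univ : Finset (Fin n))} {x y : Fin n}

lemma rel_iff_mem_part : Rel P x y ↔ y ∈ P.part x := by
  simp [Rel, P.mem_part_iff_exists, and_comm]

lemma equivalence_rel (P : Finpartition (Finset.univ : Finset (Fin n))) : Equivalence (Rel P) := by
  have hrel (x y : Fin n) : Rel P x y ↔ P.part x = P.part y := by
    rw [rel_iff_mem_part, P.mem_part_iff_part_eq_part (Finset.mem_univ _) (Finset.mem_univ _),
      eq_comm]
  exact ⟨fun _ => (hrel _ _).2 rfl, fun h => (hrel _ _).2 ((hrel _ _).1 h).symm,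
    fun h h' => (hrel _ _).2 (((hrel _ _).1 h).trans ((hrel _ _).1 h'))⟩

lemma isSingleton_iff_card_part : IsSingleton P x ↔ (P.part x).card = 1 := by
  constructor
  · rintro ⟨B, hB, hx, hcard⟩
    rwa [P.part_eq_of_mem hB hx]
  · exact fun h => ⟨P.part x, P.part_mem.2 (Finset.mem_univ x), P.mem_part (Finset.mem_univ x), h⟩

end Finpartition

namespace IsPartner

variable {n : ℕ} {P Q : Finpartition (Finset.univ : Finset (Fin n))} {f g : Fin n → Fin n}
  {x y : Fin n}

lemma rel_iff (hf : IsPartner P f) : Rel P x y ↔ y = x ∨ y = f x := by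
  simp [rel_iff_mem_part, hf x]

lemma isSingleton_iff (hf : IsPartner P f) : IsSingleton P x ↔ f x = x := by
  rw [isSingleton_iff_card_part, hf x]
  by_cases h : f x = x
  · simp [h]
  · simp [Finset.card_pair (Ne.symm h), h]

lemma relTilde_iff (hf : IsPartner P f) :
    RelTilde P x y ↔ y = x ∨ y = f x ∨ (f x = x ∧ f y = y) := by
  rw [RelTilde, hf.rel_iff, hf.isSingleton_iff, hf.isSingleton_iff, or_assoc]

lemma involutive (hf : IsPartner P f) : Function.Involutive f := fun x => by
  have hx : Rel P (f x) x := (equivalence_rel P).symm (hf.rel_iff.2 (Or.inr rfl))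
  grind [hf.rel_iff.1 hx]

lemma equivalence_relTilde (hf : IsPartner P f) : Equivalence (RelTilde P) := by
  have inv : ∀ x, f (f x) = x := hf.involutive
  constructor <;> simp only [hf.relTilde_iff] <;> grind

lemma unique (hf : IsPartner P f) (hg : IsPartner P g) : f = g := by
  funext x
  have hrel (y : Fin n) : (y = x ∨ y = f x) ↔ (y = x ∨ y = g x) := hf.rel_iff.symm.trans hg.rel_iff
  grind [hrel (f x), hrel (g x)]

lemma finpartition_unique (hP : IsPartner P f) (hQ : IsPartner Q f) : P = Q := by
  have hparts {P Q : Finpartition (Finset.univ : Finset (Fin n))} (hP : IsPartner P f)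
      (hQ : IsPartner Q f) : P.parts ⊆ Q.parts := by
    intro B hB
    obtain ⟨x, -, rfl⟩ := P.part_surjOn hB
    rw [hP x, ← hQ x]
    exact Q.part_mem.2 (Finset.mem_univ x)
  exact Finpartition.ext ((hparts hP hQ).antisymm (hparts hQ hP))

end IsPartner

lemma exists_isPartner_of_card_le_two {n : ℕ} {P : Finpartition (Finset.univ : Finset (Fin n))}
    (hP : ∀ B ∈ P.parts, B.card ≤ 2) : ∃ f, IsPartner P f := by
  refine Classical.axiomOfChoice (r := fun x y => P.part x = {x, y}) fun x => ?_
  have hx := P.mem_part (Finset.mem_univ x)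
  have hcard : ((P.part x).erase x).card ≤ 1 := by
    rw [Finset.card_erase_of_mem hx]
    exact Nat.sub_le_of_le_add (hP _ (P.part_mem.2 (Finset.mem_univ x)))
  rcases Nat.le_one_iff_eq_zero_or_eq_one.1 hcard with h | h
  · refine ⟨x, ?_⟩
    rw [← Finset.insert_erase hx, Finset.card_eq_zero.1 h, Finset.pair_eq_singleton,
      insert_empty_eq]
  · obtain ⟨y, hy⟩ := Finset.card_eq_one.1 h
    exact ⟨y, by rw [← Finset.insert_erase hx, hy]⟩

lemma exists_isPartner_of_involutive {n : ℕ} {f : Fin n → Fin n} (hf : Function.Involutive f) :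
    ∃ P, IsPartner P f := by
  have inv : ∀ x, f (f x) = x := hf
  let s : Setoid (Fin n) :=
    { r x y := y = x ∨ y = f x
      iseqv := by constructor <;> grind }
  refine ⟨Finpartition.ofSetoid s, fun x => Finset.ext fun y => ?_⟩
  rw [Finpartition.mem_part_ofSetoid_iff_rel, Finset.mem_insert, Finset.mem_singleton]
  rfl

namespace HalfPairing

variable {n : ℕ} (π : HalfPairing n)

/-- The partner involution: the other point of the pair of `x`, and `x` itself when `x` is a
through string. -/
noncomputable def partner : Fin n → Fin n :=
  (exists_isPartner_of_card_le_two π.card_le).choose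

lemma isPartner_partner : IsPartner π.P π.partner :=
  (exists_isPartner_of_card_le_two π.card_le).choose_spec

lemma partner_injective : Function.Injective (partner : HalfPairing n → Fin n → Fin n) := by
  intro π ρ h
  have hP : π.P = ρ.P := π.isPartner_partner.finpartition_unique (h ▸ ρ.isPartner_partner)
  cases π
  cases ρ
  congr

/-- The set of openers: the outward oriented points of the pairs. -/
noncomputable def openers : Finset (Fin n) :=
  Finset.univ.filter fun x =>
    π.partner x ≠ x ∧ ∀ a, π.partner a = a → ¬ sbtw x a (π.partner x)

variable {π} in
lemma mem_openers {x : Fin n} :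
    x ∈ π.openers ↔ π.partner x ≠ x ∧ ∀ a, π.partner a = a → ¬ sbtw x a (π.partner x) := by
  simp [openers]

lemma exists_partner_eq : ∃ a, π.partner a = a :=
  π.exists_singleton.imp fun _ => π.isPartner_partner.isSingleton_iff.1

variable {π} in
lemma not_relTilde_of_sbtw {x y v : Fin n} (hxy : sbtw x y (π.partner x))
    (hxv : sbtw (π.partner x) v x) : ¬ RelTilde π.P y v := by
  intro hyv
  have hf := π.isPartner_partner
  have hxfx : RelTilde π.P x (π.partner x) := hf.relTilde_iff.2 (Or.inr (Or.inl rfl))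
  have hrel : RelTilde π.P x y :=
    (nonCrossingRel_iff_sbtw hf.equivalence_relTilde).1 π.nc_tilde _ _ _ _ hxy hxv hxfx hyv
  rcases hf.relTilde_iff.1 hrel with h | h | h
  · exact sbtw_irrefl_left (h ▸ hxy)
  · exact sbtw_irrefl_right (h ▸ hxy)
  · exact sbtw_irrefl_left_right (h.1 ▸ hxy)

lemma isHalfMatching_openers : IsHalfMatching Finset.univ π.openers π.partner where
  involutive := π.isPartner_partner.involutive
  mem_of_apply_ne _ := Finset.mem_univ _
  mem_or_apply_mem {x} hx := by
    have inv := π.isPartner_partner.involutive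
    by_contra! hcon
    simp only [mem_openers, inv x] at hcon
    push Not at hcon
    obtain ⟨a, ha, hxa⟩ := hcon.1 hx
    obtain ⟨b, hb, hxb⟩ := hcon.2 hx.symm
    exact not_relTilde_of_sbtw hxa hxb
      (π.isPartner_partner.relTilde_iff.2 (Or.inr (Or.inr ⟨ha, hb⟩)))
  apply_notMem {x} hx hfx := by
    have inv := π.isPartner_partner.involutive
    obtain ⟨a, ha⟩ := π.exists_partner_eq
    rw [mem_openers] at hx hfx
    rw [inv x] at hfx
    rcases sbtw_or_sbtw_of_ne (a := x) (b := a) (c := π.partner x) (by grind) (by grind [inv x])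
      hx.1 with h | h
    · exact hx.2 a ha h
    · exact hfx.2 a ha h
  apply_ne hx _ hxy hy := (mem_openers.1 hx).2 _ hy hxy
  sbtw_apply {x y} hx hxy := by
    have inv := π.isPartner_partner.involutive
    have hyx : y ≠ x := by rintro rfl; exact sbtw_irrefl_left hxy
    have hyf : y ≠ π.partner x := by rintro rfl; exact sbtw_irrefl_right hxy
    refine (sbtw_or_sbtw_of_ne (by grind [inv y]) (inv.injective.ne hyx) (mem_openers.1 hx).1
      ).resolve_right fun h => ?_
    exact not_relTilde_of_sbtw hxy h (π.isPartner_partner.relTilde_iff.2 (Or.inr (Or.inl rfl)))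

lemma card_throughFinset_add_two_mul_card_openers :
    (throughFinset π).card + 2 * π.openers.card = n := by
  have hthrough : throughFinset π = Finset.univ.filter fun x => π.partner x = x := by
    ext x
    simp [throughFinset, π.isPartner_partner.isSingleton_iff]
  rw [hthrough, π.isHalfMatching_openers.card_filter_add_two_mul_card, Finset.card_fin]

lemma two_mul_card_openers_lt : 2 * π.openers.card < n := by
  obtain ⟨a, ha⟩ := π.exists_singleton
  have : 0 < (throughFinset π).card := Finset.card_pos.2 ⟨a, by simpa [throughFinset] using ha⟩
  have := π.card_throughFinset_add_two_mul_card_openers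
  omega

lemma openers_injective : Function.Injective (openers : HalfPairing n → Finset (Fin n)) := by
  intro π ρ h
  have hlt : 2 * π.openers.card < (Finset.univ : Finset (Fin n)).card := by
    simpa using π.two_mul_card_openers_lt
  exact partner_injective ((existsUnique_isHalfMatching (Finset.subset_univ _) hlt).unique
    π.isHalfMatching_openers (h ▸ ρ.isHalfMatching_openers))

end HalfPairing

lemma IsHalfMatching.exists_halfPairing {n : ℕ} {S : Finset (Fin n)} {f : Fin n → Fin n}
    (hf : IsHalfMatching Finset.univ S f) (hfix : ∃ a, f a = a) :
    ∃ π : HalfPairing n, π.partner = f := by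
  obtain ⟨P, hP⟩ := exists_isPartner_of_involutive hf.involutive
  have hnot {x y v : Fin n} (hxy : sbtw x y (f x)) (hxv : sbtw (f x) v x) : ¬ RelTilde P y v := by
    rw [hP.relTilde_iff]
    exact hf.not_crossing (Finset.mem_univ y) (Finset.mem_univ v) hxy hxv
  have nc : NonCrossingRel (Rel P) := by
    refine (nonCrossingRel_iff_sbtw (equivalence_rel P)).2 fun x y u v hxyu huvx hxu hyv => ?_
    rcases hP.rel_iff.1 hxu with rfl | rfl
    · exact (sbtw_irrefl_left_right hxyu).elim
    · exact (hnot hxyu huvx (Or.inl hyv)).elim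
  have nc_tilde : NonCrossingRel (RelTilde P) := by
    refine (nonCrossingRel_iff_sbtw hP.equivalence_relTilde).2 fun x y u v hxyu huvx hxu hyv => ?_
    rcases hP.relTilde_iff.1 hxu with rfl | rfl | ⟨hx, -⟩
    · exact (sbtw_irrefl_left_right hxyu).elim
    · exact (hnot hxyu huvx hyv).elim
    rcases hP.relTilde_iff.1 hyv with rfl | rfl | ⟨hy, -⟩
    · exact (sbtw_asymm hxyu huvx).elim
    · have hyuv := (huvx.cyclic_left.trans_left hxyu).cyclic_left
      have hvxy := (hxyu.cyclic_left.trans_left huvx).cyclic_left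
      exact (hnot hyuv hvxy (hP.equivalence_relTilde.symm hxu)).elim
    · exact hP.relTilde_iff.2 (Or.inr (Or.inr ⟨hx, hy⟩))
  let π : HalfPairing n :=
    { P
      card_le := fun B hB => by
        obtain ⟨x, -, rfl⟩ := P.part_surjOn hB
        exact hP x ▸ Finset.card_le_two
      exists_singleton := hfix.imp fun _ => hP.isSingleton_iff.2
      nc
      nc_tilde }
  exact ⟨π, π.isPartner_partner.unique hP⟩

lemma HalfPairing.exists_openers_eq {n : ℕ} {S : Finset (Fin n)} (hS : 2 * S.card < n) :
    ∃ π : HalfPairing n, π.openers = S := by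
  have hlt : 2 * S.card < (Finset.univ : Finset (Fin n)).card := by simpa using hS
  obtain ⟨f, hf, -⟩ := existsUnique_isHalfMatching (Finset.subset_univ S) hlt
  obtain ⟨a, ha, hfa⟩ := hf.exists_apply_eq hlt
  obtain ⟨π, rfl⟩ := hf.exists_halfPairing ⟨a, hfa⟩
  refine ⟨π, Finset.ext fun x => ?_⟩
  rw [hf.mem_iff ⟨a, ha, hfa⟩, mem_openers]
  simp

/-- The number of non-crossing half-pairings on `[n]` with exactly `k` through
strings (`n ≥ k ≥ 1`, `n - k` even) is `C(n, (n-k)/2)`. -/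
theorem card_halfPairings (n k : ℕ) (hk : 1 ≤ k) (hkn : k ≤ n) (hpar : Even (n - k)) :
    Nat.card {π : HalfPairing n // (throughFinset π).card = k}
      = n.choose ((n - k) / 2) := by
  obtain ⟨m, hm⟩ := hpar
  have himage : HalfPairing.openers '' {π : HalfPairing n | (throughFinset π).card = k} =
      Finset.powersetCard m (Finset.univ : Finset (Fin n)) := by
    ext S
    rw [Finset.mem_coe, Finset.mem_powersetCard_univ]
    constructor
    · rintro ⟨π, (hπ : (throughFinset π).card = k), rfl⟩
      have := π.card_throughFinset_add_two_mul_card_openers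
      omega
    · intro hS
      obtain ⟨π, rfl⟩ := HalfPairing.exists_openers_eq (n := n) (S := S) (by omega)
      have := π.card_throughFinset_add_two_mul_card_openers
      exact ⟨π, show (throughFinset π).card = k by omega, rfl⟩
  calc Nat.card {π : HalfPairing n // (throughFinset π).card = k}
    _ = Nat.card (HalfPairing.openers '' {π : HalfPairing n | (throughFinset π).card = k}) :=
      (Nat.card_image_of_injective HalfPairing.openers_injective _).symm
    _ = n.choose ((n - k) / 2) := by
      rw [himage, Nat.card_coe_set_eq, Set.ncard_coe_finset, Finset.card_powersetCard,
        Finset.card_univ, Fintype.card_fin, show (n - k) / 2 = m by omega]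

end NCC
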